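/- arXiv:1805.04682 — 2 statements merged into one kernel-verified Lean document; each statement's English description precedes it below -/
import Mathlib

section
/- Let (M, ρ, μ) be a metric measure space satisfying the doubling condition of dimension d with constant c₀' ≥ 1 (μ(B(x, λr)) ≤ c₀' λ^d μ(B(x, r)) for all x, r > 0, λ > 1) and the non-collapsing condition (μ(B(x, 1)) ≥ c₃ > 0 for all x). Let 0 < δ ≤ 1 and let K : M × M → ℝ be measurable with |K(x, y)| ≤ c_K μ(B(x, δ))^{−1} (1 + ρ(x, y)/δ)^{−(d+1)} for all x, y ∈ M. Then there is a constant c⋆ > 0 depending only on c_K, d, c₀', c₃ (independent of p) such that for every 1 ≤ p ≤ ∞ and every x ∈ M, ‖K(x, ·)‖_{L^p(μ)} ≤ c⋆ μ(B(x, δ))^{1/p − 1} ≤ c⋆ (c₀'/c₃)^{1−1/p} δ^{−d(1 − 1/p)}. -/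
open MeasureTheory Metric
open scoped ENNReal

/-!
Write `V = μ (ball x δ)`. The pointwise hypothesis gives `‖K(x,·)‖_∞ ≤ c_K / V`. Decomposing `M`
into the dyadic annuli `2^(k-1) ≤ ρ(x,y)/δ < 2^k` and using doubling on each `ball x (2^k δ)`, the
decay exponent `d + 1` beats the volume growth exponent `d` and leaves a geometric series, so that
`∫ (1 + ρ(x,y)/δ)^{-(d+1)} dμ(y) ≤ 2^(d+2) c₀' V` (`lintegral_decay_le`), hence
`‖K(x,·)‖_1 ≤ 2^(d+2) c₀' c_K`. The first inequality, with `c⋆ = 2^(d+2) c₀' c_K`, is the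
interpolation between these two endpoints (`eLpNorm_le_of_sup_of_lintegral`).

The second inequality is the lower bound `c₃ ≤ μ (ball x 1) ≤ c₀' δ^(-d) V`, raised to the
power `1 - 1/p`.

The measure of a ball may be infinite; in that case `K(x,·) = 0` and the first inequality is trivial.
-/

/-- The dyadic majorant: `(1 + r)^{-s} ≤ ∑_k 2^s 2^{-ks} 1_{r < 2^k}`, keeping only the smallest `k`
with `r < 2^k`. -/
lemma decay_le_tsum {s r : ℝ} (hs : 0 ≤ s) (hr : 0 ≤ r) :
    ENNReal.ofReal ((1 + r) ^ (-s)) ≤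
      ∑' k : ℕ, if r < 2 ^ k then ENNReal.ofReal (2 ^ s * ((2 : ℝ) ^ k) ^ (-s)) else 0 := by
  have hex : ∃ k : ℕ, r < 2 ^ k := pow_unbounded_of_one_lt r one_lt_two
  classical
  refine le_trans ?_ (ENNReal.le_tsum (Nat.find hex))
  rw [if_pos (Nat.find_spec hex)]
  refine ENNReal.ofReal_le_ofReal ?_
  have key : (2 : ℝ) ^ Nat.find hex / 2 ≤ 1 + r := by
    rcases hk : Nat.find hex with _ | k
    · norm_num; linarith
    · have := Nat.find_min hex (m := k) (by omega)
      rw [pow_succ]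
      linarith
  calc (1 + r) ^ (-s) ≤ ((2 : ℝ) ^ Nat.find hex / 2) ^ (-s) :=
        Real.rpow_le_rpow_of_nonpos (by positivity) key (by linarith)
    _ = _ := by
        rw [Real.div_rpow (by positivity) (by norm_num), Real.rpow_neg (by norm_num : (0:ℝ) ≤ 2),
          div_inv_eq_mul, mul_comm]

/-- Under doubling, `(1 + ρ(x,y)/δ)^{-(d+1)}` has integral at most a constant times the volume of
`ball x δ`. -/
lemma lintegral_decay_le {c₀' d : ℝ} (hc₀' : 1 ≤ c₀') (hd : 0 < d)
    {M : Type} [MetricSpace M] [MeasurableSpace M] [BorelSpace M] (μ : Measure M)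
    (hdoub : ∀ (x : M) (r l : ℝ), 0 < r → 1 < l →
        μ (ball x (l * r)) ≤ ENNReal.ofReal (c₀' * l ^ d) * μ (ball x r))
    {δ : ℝ} (hδ : 0 < δ) (x : M) :
    ∫⁻ y, ENNReal.ofReal ((1 + dist x y / δ) ^ (-(d + 1))) ∂μ ≤
      ENNReal.ofReal (2 ^ (d + 2) * c₀') * μ (ball x δ) := by
  calc ∫⁻ y, ENNReal.ofReal ((1 + dist x y / δ) ^ (-(d + 1))) ∂μ
      ≤ ∫⁻ y, ∑' k : ℕ, (ball x (2 ^ k * δ)).indicator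
          (fun _ => ENNReal.ofReal (2 ^ (d + 1) * ((2 : ℝ) ^ k) ^ (-(d + 1)))) y ∂μ := by
        refine lintegral_mono fun y => ?_
        refine (decay_le_tsum (by linarith) (by positivity)).trans
          (ENNReal.tsum_le_tsum fun k => ?_)
        split_ifs with h
        · rw [Set.indicator_of_mem (mem_ball'.2 ((div_lt_iff₀ hδ).1 h))]
        · exact zero_le
    _ = ∑' k : ℕ, ENNReal.ofReal (2 ^ (d + 1) * ((2 : ℝ) ^ k) ^ (-(d + 1))) *
          μ (ball x (2 ^ k * δ)) := by
        rw [lintegral_tsum fun k => (measurable_const.indicator measurableSet_ball).aemeasurable]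
        simp [lintegral_indicator_const measurableSet_ball]
    _ ≤ ∑' k : ℕ, ENNReal.ofReal (2 ^ (d + 1) * c₀') * μ (ball x δ) *
          ENNReal.ofReal ((1 / 2) ^ k) := by
        refine ENNReal.tsum_le_tsum fun k => ?_
        have hball : μ (ball x (2 ^ k * δ)) ≤
            ENNReal.ofReal (c₀' * ((2 : ℝ) ^ k) ^ d) * μ (ball x δ) := by
          rcases Nat.eq_zero_or_pos k with rfl | hk
          · simpa using le_mul_of_one_le_left' (ENNReal.one_le_ofReal.2 hc₀')
          · exact hdoub x δ _ hδ (one_lt_pow₀ one_lt_two hk.ne')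
        refine (mul_le_mul_right hball _).trans_eq ?_
        rw [← mul_assoc, ← ENNReal.ofReal_mul (by positivity), mul_right_comm _ (μ _),
          ← ENNReal.ofReal_mul (by positivity)]
        have h2 : ((2 : ℝ) ^ k) ^ (-(d + 1)) * ((2 : ℝ) ^ k) ^ d = (1 / 2) ^ k := by
          rw [← Real.rpow_add (by positivity), show -(d + 1) + d = -1 by ring, Real.rpow_neg_one]
          simp
        rw [← h2]
        congr 2
        ring
    _ = ENNReal.ofReal (2 ^ (d + 2) * c₀') * μ (ball x δ) := by
        rw [ENNReal.tsum_mul_left, ← ENNReal.ofReal_tsum_of_nonneg (fun _ => by positivity)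
          summable_geometric_two, tsum_geometric_two, mul_right_comm,
          ← ENNReal.ofReal_mul (by positivity)]
        congr 2
        rw [show d + 2 = d + 1 + 1 by ring, Real.rpow_add_one (by norm_num : (2 : ℝ) ≠ 0) (d + 1)]
        ring

/-- Interpolation between `L^∞` and `L^1`: a bound `|f| ≤ c / V` together with `‖f‖_1 ≤ c C`, where
`C ≥ 1`, gives `‖f‖_p ≤ c C V^{1/p - 1}`. -/
lemma eLpNorm_le_of_sup_of_lintegral {α : Type*} [MeasurableSpace α] {μ : Measure α} {f : α → ℝ}
    {c C V : ℝ≥0∞} (hc : c ≠ ∞) (hC : 1 ≤ C) (hV0 : V ≠ 0) (hV : V ≠ ∞)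
    (hsup : ∀ y, ‖f y‖ₑ ≤ c * V⁻¹) (hint : ∫⁻ y, ‖f y‖ₑ ∂μ ≤ c * C) {p : ℝ≥0∞} (hp : 1 ≤ p) :
    eLpNorm f p μ ≤ c * C * V ^ (p⁻¹.toReal - 1) := by
  rcases eq_or_ne p ∞ with rfl | hpt
  · simp only [ENNReal.inv_top, ENNReal.toReal_zero, zero_sub, ENNReal.rpow_neg_one,
      eLpNorm_exponent_top]
    refine (eLpNormEssSup_le_of_ae_enorm_bound (Filter.Eventually.of_forall hsup)).trans ?_
    gcongr
    exact le_mul_of_one_le_right' hC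
  have hp0 : p ≠ 0 := (zero_lt_one.trans_le hp).ne'
  have hq : 1 ≤ p.toReal := by simpa using ENNReal.toReal_mono hpt hp
  rw [eLpNorm_eq_lintegral_rpow_enorm_toReal hp0 hpt, ENNReal.toReal_inv]
  set q := p.toReal
  have hq0 : 0 < q := by linarith
  set A := c * V⁻¹ with hA
  have hAt : A ≠ ∞ := ENNReal.mul_ne_top hc (ENNReal.inv_ne_top.2 hV0)
  have hcA : c = A * V := by rw [hA, mul_assoc, ENNReal.inv_mul_cancel hV0 hV, mul_one]
  have hpow : ∀ a : ℝ≥0∞, a ^ q = a ^ (q - 1) * a := fun a => by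
    conv_rhs => rw [← ENNReal.rpow_one a, ← ENNReal.rpow_mul, one_mul]
    rw [← ENNReal.rpow_add_of_nonneg _ _ (by linarith) zero_le_one]
    congr 1; ring
  have hI : ∫⁻ y, ‖f y‖ₑ ^ q ∂μ ≤ A ^ q * (V * C) := calc
    ∫⁻ y, ‖f y‖ₑ ^ q ∂μ ≤ ∫⁻ y, A ^ (q - 1) * ‖f y‖ₑ ∂μ := by
        refine lintegral_mono fun y => ?_
        simp only [hpow]
        gcongr
        exact hsup y
    _ = A ^ (q - 1) * ∫⁻ y, ‖f y‖ₑ ∂μ :=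
        lintegral_const_mul' _ _ (ENNReal.rpow_ne_top_of_nonneg (by linarith) hAt)
    _ ≤ A ^ (q - 1) * (c * C) := by gcongr
    _ = A ^ q * (V * C) := by rw [hpow A]; nth_rewrite 1 [hcA]; ring
  calc (∫⁻ y, ‖f y‖ₑ ^ q ∂μ) ^ (1 / q) ≤ (A ^ q * (V * C)) ^ (1 / q) :=
        ENNReal.rpow_le_rpow hI (by positivity)
    _ = A * V ^ q⁻¹ * C ^ q⁻¹ := by
        rw [one_div, ENNReal.mul_rpow_of_nonneg (A ^ q) _ (by positivity),
          ENNReal.mul_rpow_of_nonneg V _ (by positivity), ← ENNReal.rpow_mul,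
          mul_inv_cancel₀ hq0.ne', ENNReal.rpow_one, mul_assoc A]
    _ ≤ A * V ^ q⁻¹ * C := by
        gcongr
        simpa using ENNReal.rpow_le_rpow_of_exponent_le hC (inv_le_one_of_one_le₀ hq)
    _ = c * C * V ^ (q⁻¹ - 1) := by
        rw [ENNReal.rpow_sub _ _ hV0 hV, ENNReal.rpow_one, hA, div_eq_mul_inv]
        ring

/-- In a doubling (dimension `d`, constant `c₀' ≥ 1`) and
non-collapsing (constant `c₃ > 0`) metric measure space, if `0 < δ ≤ 1` and
`|K(x,y)| ≤ c_K μ(B(x,δ))⁻¹ (1 + ρ(x,y)/δ)^{-(d+1)}`, then there is `c⋆ > 0`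
depending only on `c_K, d, c₀', c₃` (independent of `p`) such that for all
`1 ≤ p ≤ ∞` and all `x`:
`‖K(x,·)‖_p ≤ c⋆ μ(B(x,δ))^{1/p-1} ≤ c⋆ (c₀'/c₃)^{1-1/p} δ^{-d(1-1/p)}`. -/
theorem kernel_Lp_norm_bound
    (cK c₀' c₃ d : ℝ) (hcK : 0 < cK) (hc₀' : 1 ≤ c₀') (hc₃ : 0 < c₃) (hd : 0 < d) :
    ∃ cstar > (0 : ℝ),
      ∀ (M : Type) [MetricSpace M] [MeasurableSpace M] [BorelSpace M] (μ : Measure M),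
      (∀ (x : M) (r l : ℝ), 0 < r → 1 < l →
        μ (ball x (l * r)) ≤ ENNReal.ofReal (c₀' * l ^ d) * μ (ball x r)) →
      (∀ x : M, ENNReal.ofReal c₃ ≤ μ (ball x 1)) →
      ∀ (δ : ℝ), 0 < δ → δ ≤ 1 →
      ∀ (K : M → M → ℝ), Measurable (fun z : M × M => K z.1 z.2) →
        (∀ x y, ENNReal.ofReal |K x y| ≤
          ENNReal.ofReal cK * (μ (ball x δ))⁻¹ *
            ENNReal.ofReal ((1 + dist x y / δ) ^ (-(d + 1)))) →
      ∀ (p : ℝ≥0∞), 1 ≤ p → ∀ x : M,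
        eLpNorm (fun y => K x y) p μ ≤
            ENNReal.ofReal cstar * μ (ball x δ) ^ (p⁻¹.toReal - 1) ∧
          ENNReal.ofReal cstar * μ (ball x δ) ^ (p⁻¹.toReal - 1) ≤
            ENNReal.ofReal (cstar * (c₀' / c₃) ^ (1 - p⁻¹.toReal) *
              δ ^ (-(d * (1 - p⁻¹.toReal)))) := by
  have hC : 1 ≤ 2 ^ (d + 2) * c₀' := one_le_mul_of_one_le_of_one_le
    (Real.one_le_rpow one_le_two (by linarith)) hc₀'
  refine ⟨cK * (2 ^ (d + 2) * c₀'), by positivity, ?_⟩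
  intro M _ _ _ μ hdoub hnc δ hδ hδ1 K hK hbound p hp x
  have hvol : ENNReal.ofReal c₃ ≤ ENNReal.ofReal (c₀' * δ ^ (-d)) * μ (ball x δ) := by
    rcases hδ1.eq_or_lt with rfl | hlt
    · refine (hnc x).trans ?_
      simpa using le_mul_of_one_le_left' (ENNReal.one_le_ofReal.2 hc₀')
    · have := hdoub x δ δ⁻¹ hδ ((one_lt_inv₀ hδ).2 hlt)
      rw [inv_mul_cancel₀ hδ.ne', Real.inv_rpow hδ.le, ← Real.rpow_neg hδ.le] at this
      exact (hnc x).trans this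
  have hV0 : μ (ball x δ) ≠ 0 := by
    intro h
    rw [h, mul_zero] at hvol
    exact (ENNReal.ofReal_pos.2 hc₃).not_ge hvol
  have hdecay : ∀ y, ENNReal.ofReal ((1 + dist x y / δ) ^ (-(d + 1))) ≤ 1 := fun y =>
    ENNReal.ofReal_le_one.2 (Real.rpow_le_one_of_one_le_of_nonpos
      (le_add_of_nonneg_right (by positivity)) (by linarith))
  have hp1 : p⁻¹.toReal ≤ 1 := by
    simpa using ENNReal.toReal_mono ENNReal.one_ne_top (ENNReal.inv_le_one.2 hp)
  constructor
  · rcases eq_or_ne (μ (ball x δ)) ∞ with hV | hV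
    · have h0 : (fun y => K x y) = 0 := by
        funext y
        simpa [hV] using hbound x y
      simp [h0]
    · rw [ENNReal.ofReal_mul hcK.le]
      refine eLpNorm_le_of_sup_of_lintegral ENNReal.ofReal_ne_top (ENNReal.one_le_ofReal.2 hC)
        hV0 hV (fun y => ?_) ?_ hp
      · rw [Real.enorm_eq_ofReal_abs]
        exact (hbound x y).trans (mul_le_of_le_one_right' (hdecay y))
      · calc ∫⁻ y, ‖K x y‖ₑ ∂μ
            ≤ ∫⁻ y, ENNReal.ofReal cK * (μ (ball x δ))⁻¹ *
                ENNReal.ofReal ((1 + dist x y / δ) ^ (-(d + 1))) ∂μ :=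
              lintegral_mono fun y => by
                rw [Real.enorm_eq_ofReal_abs]; exact hbound x y
          _ = ENNReal.ofReal cK * (μ (ball x δ))⁻¹ *
                ∫⁻ y, ENNReal.ofReal ((1 + dist x y / δ) ^ (-(d + 1))) ∂μ :=
              lintegral_const_mul' _ _
                (ENNReal.mul_ne_top ENNReal.ofReal_ne_top (ENNReal.inv_ne_top.2 hV0))
          _ ≤ ENNReal.ofReal cK * (μ (ball x δ))⁻¹ *
                (ENNReal.ofReal (2 ^ (d + 2) * c₀') * μ (ball x δ)) := by
              gcongr
              exact lintegral_decay_le hc₀' hd μ hdoub hδ x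
          _ = ENNReal.ofReal cK * ENNReal.ofReal (2 ^ (d + 2) * c₀') *
                ((μ (ball x δ))⁻¹ * μ (ball x δ)) := by ring
          _ = _ := by rw [ENNReal.inv_mul_cancel hV0 hV, mul_one]
  · have hinv : (μ (ball x δ))⁻¹ ≤ ENNReal.ofReal (c₀' / c₃ * δ ^ (-d)) := by
      have hb : 0 < c₀' / c₃ * δ ^ (-d) := by positivity
      rw [ENNReal.inv_le_iff_le_mul (fun h => absurd h ENNReal.ofReal_ne_top)
        (fun _ => (ENNReal.ofReal_pos.2 hb).ne')]
      calc (1 : ℝ≥0∞) = ENNReal.ofReal c₃⁻¹ * ENNReal.ofReal c₃ := by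
            rw [← ENNReal.ofReal_mul (by positivity), inv_mul_cancel₀ hc₃.ne', ENNReal.ofReal_one]
        _ ≤ ENNReal.ofReal c₃⁻¹ * (ENNReal.ofReal (c₀' * δ ^ (-d)) * μ (ball x δ)) := by gcongr
        _ = μ (ball x δ) * ENNReal.ofReal (c₀' / c₃ * δ ^ (-d)) := by
            rw [← mul_assoc, ← ENNReal.ofReal_mul (by positivity), mul_comm]
            congr 2
            ring
    rw [mul_assoc (cK * _) _ _, ENNReal.ofReal_mul (p := cK * _) (q := _ * _ ^ _) (by positivity)]
    gcongr
    rw [← neg_sub, ENNReal.rpow_neg, ← ENNReal.inv_rpow]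
    refine (ENNReal.rpow_le_rpow hinv (by linarith)).trans_eq ?_
    rw [ENNReal.ofReal_rpow_of_nonneg (by positivity) (by linarith),
      Real.mul_rpow (by positivity) (by positivity), ← Real.rpow_mul hδ.le, neg_mul]
end

section
/- On M = [−1, 1], let α, β > −1, let μ be the measure with density w(x) = (1 − x)^α (1 + x)^β with respect to Lebesgue measure, and define ρ(x, y) := |arccos x − arccos y|. Then there exists a constant c > 1, depending only on α and β, such that for every x ∈ [−1, 1] and every 0 < r ≤ π, c^{−1} r (1 − x + r²)^{α + 1/2} (1 + x + r²)^{β + 1/2} ≤ μ({y ∈ [−1, 1] : ρ(x, y) < r}) ≤ c r (1 − x + r²)^{α + 1/2} (1 + x + r²)^{β + 1/2}. -/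
/-!
In the angular variable `y = cos t`, `t ∈ [0, π]`, the ball `B(x, r)` becomes the interval of
radius `r` around `θ = arccos x`, and the Jacobi measure acquires the density
`(1 - cos t)^(α + 1/2) (1 + cos t)^(β + 1/2)`, because `sin t = √((1 - cos t)(1 + cos t))`.
Since `1 - cos t` is comparable to `t²` and `1 + cos t` to `(π - t)²`, this density behaves like
`t^a (π - t)^b` with `a = 2α + 1 > -1` and `b = 2β + 1 > -1`, while `1 - x + r²` and `1 + x + r²`
are comparable to `(θ + r)²` and `(π - θ + r)²` (`scale_comparable`).

Upper bound (`upper_bound`): on the half `t ≤ π/2` the factor `1 + cos t` is comparable to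
`1 + x + r²` (`half_density_le`), so only the integral of `t^a` over the ball is needed, and
`power_ball_le` bounds it by a multiple of `r (θ + r)^a`; this is where `a > -1` enters. The other
half follows by the reflection `t ↦ π - t`.

Lower bound (`lower_bound`): the ball contains an interval of length `r / 8` on which `t` is
comparable to `θ + r` and `π - t` to `π - θ + r`, so that the density is there comparable to its
scale at the centre (`scale_le_density`).
-/

open MeasureTheory Set
open scoped ENNReal

/-- The Jacobi measure on `[-1,1]` with density `(1-x)^α (1+x)^β` with respect to
Lebesgue measure. -/
noncomputable def jacobiMeasure (α β : ℝ) : Measure ℝ :=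
  (volume.restrict (Icc (-1 : ℝ) 1)).withDensity
    (fun x => ENNReal.ofReal ((1 - x) ^ α * (1 + x) ^ β))

/-! ### Elementary comparisons -/

/-- Powers of comparable positive reals are comparable, whatever the sign of the exponent. -/
lemma rpow_le_of_comparable (p : ℝ) {K A B : ℝ} (hK : 1 ≤ K) (hA : 0 < A)
    (h1 : A ≤ K * B) (h2 : B ≤ K * A) : B ^ p ≤ K ^ |p| * A ^ p := by
  have hK0 : 0 < K := by linarith
  have hB : 0 < B := by
    by_contra h
    have := mul_nonneg hK0.le (sub_nonneg.2 (not_lt.1 h))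
    linarith
  rcases le_or_gt 0 p with hp | hp
  · rw [abs_of_nonneg hp, ← Real.mul_rpow hK0.le hA.le]
    exact Real.rpow_le_rpow hB.le h2 hp
  · have h3 : K⁻¹ * A ≤ B := by
      rw [inv_mul_le_iff₀ hK0]; exact h1
    calc B ^ p ≤ (K⁻¹ * A) ^ p := Real.rpow_le_rpow_of_nonpos (by positivity) h3 hp.le
      _ = K ^ |p| * A ^ p := by
        rw [Real.mul_rpow (by positivity) hA.le, abs_of_neg hp, Real.inv_rpow hK0.le,
          Real.rpow_neg hK0.le]

lemma one_sub_cos_le_sq (t : ℝ) : 1 - Real.cos t ≤ t ^ 2 := by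
  have := Real.one_sub_sq_div_two_le_cos (x := t)
  nlinarith [sq_nonneg t]

lemma sq_le_one_sub_cos {t : ℝ} (h0 : 0 ≤ t) (h1 : t ≤ Real.pi) :
    t ^ 2 ≤ 8 * (1 - Real.cos t) := by
  have h := Real.cos_le_one_sub_mul_cos_sq (x := t) (by rw [abs_of_nonneg h0]; exact h1)
  have hpi := Real.pi_lt_four
  have hpp := Real.pi_pos
  have h2 : 2 / Real.pi ^ 2 ≥ 1 / 8 := by
    rw [ge_iff_le, div_le_div_iff₀ (by norm_num) (by positivity)]
    nlinarith
  nlinarith [mul_nonneg (sub_nonneg.2 h2) (sq_nonneg t)]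

/-- `1 - cos θ + r²` is comparable to `(θ + r)²`. -/
lemma scale_comparable {θ r : ℝ} (h0 : 0 ≤ θ) (h1 : θ ≤ Real.pi) (hr : 0 < r) :
    (θ + r) ^ 2 ≤ 16 * (1 - Real.cos θ + r ^ 2) ∧ 1 - Real.cos θ + r ^ 2 ≤ (θ + r) ^ 2 := by
  have := sq_le_one_sub_cos h0 h1
  have := one_sub_cos_le_sq θ
  constructor <;> nlinarith [sq_nonneg (θ - r), mul_nonneg h0 hr.le, sq_nonneg r]

/-! ### The angular variable -/

/-- After the substitution `y = cos t` the Jacobian `sin t = √((1 - cos t)(1 + cos t))` shifts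
both exponents of the weight by `1/2`. -/
lemma jacobian_weight (α β : ℝ) {t : ℝ} (h0 : 0 < t) (h1 : t < Real.pi) :
    |-Real.sin t| * ((1 - Real.cos t) ^ α * (1 + Real.cos t) ^ β) =
      (1 - Real.cos t) ^ (α + 1 / 2) * (1 + Real.cos t) ^ (β + 1 / 2) := by
  have hs : 0 < Real.sin t := Real.sin_pos_of_pos_of_lt_pi h0 h1
  have hsc := Real.sin_sq_add_cos_sq t
  have hS : 0 < 1 - Real.cos t := by nlinarith [Real.neg_one_le_cos t]
  have hT : 0 < 1 + Real.cos t := by nlinarith [Real.cos_le_one t]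
  have : |-Real.sin t| = (1 - Real.cos t) ^ (1 / 2 : ℝ) * (1 + Real.cos t) ^ (1 / 2 : ℝ) := by
    rw [abs_neg, abs_of_pos hs, ← Real.mul_rpow hS.le hT.le, ← Real.sqrt_eq_rpow,
      show (1 - Real.cos t) * (1 + Real.cos t) = Real.sin t ^ 2 by linarith,
      Real.sqrt_sq hs.le]
  rw [this, Real.rpow_add hS, Real.rpow_add hT]
  ring

/-- The density of the Jacobi measure in the angular variable. -/
noncomputable def angDensity (α β t : ℝ) : ℝ≥0∞ :=
  ENNReal.ofReal |-Real.sin t| *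
    ENNReal.ofReal ((1 - Real.cos t) ^ α * (1 + Real.cos t) ^ β)

lemma angDensity_eq (α β : ℝ) {t : ℝ} (h0 : 0 < t) (h1 : t < Real.pi) :
    angDensity α β t =
      ENNReal.ofReal ((1 - Real.cos t) ^ (α + 1 / 2) * (1 + Real.cos t) ^ (β + 1 / 2)) := by
  rw [angDensity, ← ENNReal.ofReal_mul (abs_nonneg _), jacobian_weight α β h0 h1]

lemma measurableSet_angBall (θ r : ℝ) :
    MeasurableSet {t | t ∈ Icc 0 Real.pi ∧ |θ - t| < r} :=
  measurableSet_Icc.inter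
    (measurableSet_lt (by fun_prop) measurable_const : MeasurableSet {t : ℝ | |θ - t| < r})

/-- Change of variables `y = cos t` for the measure of a ball. -/
lemma jacobiMeasure_ball (α β x r : ℝ) :
    jacobiMeasure α β {y ∈ Icc (-1 : ℝ) 1 | |Real.arccos x - Real.arccos y| < r} =
      ∫⁻ t in {t | t ∈ Icc 0 Real.pi ∧ |Real.arccos x - t| < r}, angDensity α β t := by
  have hm : MeasurableSet {y ∈ Icc (-1 : ℝ) 1 | |Real.arccos x - Real.arccos y| < r} :=
    measurableSet_Icc.inter (measurableSet_lt
      ((continuous_const.sub Real.continuous_arccos).abs.measurable) measurable_const :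
        MeasurableSet {y : ℝ | |Real.arccos x - Real.arccos y| < r})
  have him : {y ∈ Icc (-1 : ℝ) 1 | |Real.arccos x - Real.arccos y| < r} =
      Real.cos '' {t | t ∈ Icc 0 Real.pi ∧ |Real.arccos x - t| < r} := by
    ext y
    constructor
    · rintro ⟨hy, h⟩
      exact ⟨Real.arccos y, ⟨⟨Real.arccos_nonneg y, Real.arccos_le_pi y⟩, h⟩,
        Real.cos_arccos hy.1 hy.2⟩
    · rintro ⟨t, ⟨ht, h⟩, rfl⟩
      refine ⟨⟨Real.neg_one_le_cos t, Real.cos_le_one t⟩, ?_⟩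
      rwa [Real.arccos_cos ht.1 ht.2]
  rw [jacobiMeasure, withDensity_apply _ hm, Measure.restrict_restrict hm,
    inter_eq_left.2 (fun y hy => hy.1), him,
    lintegral_image_eq_lintegral_abs_deriv_mul (measurableSet_angBall _ r)
      (fun t _ => (Real.hasDerivAt_cos t).hasDerivWithinAt)
      (Real.injOn_cos.mono fun t ht => ht.1)]
  rfl

/-! ### Upper bound -/

/-- Mass of a ball for the power weight `t ^ a` on the half-line: when `2r ≤ θ` the weight is
essentially constant on the ball, otherwise the ball sits in `[0, θ + r]` with `θ + r < 3r`. -/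
lemma power_ball_le {a : ℝ} (ha : -1 < a) : ∃ K : ℝ, 0 < K ∧ ∀ θ r : ℝ, 0 ≤ θ → 0 < r →
    ∫⁻ t in {t : ℝ | 0 ≤ t ∧ |θ - t| < r}, ENNReal.ofReal (t ^ a) ≤
      ENNReal.ofReal (K * r * (θ + r) ^ a) := by
  have ha1 : 0 < a + 1 := by linarith
  have h3 : (0 : ℝ) < 3 ^ |a| := by positivity
  refine ⟨2 * 3 ^ |a| + 3 / (a + 1), by positivity, fun θ r hθ hr => ?_⟩
  have hX : 0 < (θ + r) ^ a := Real.rpow_pos_of_pos (by linarith) _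
  rcases le_or_gt (2 * r) θ with h | h
  · calc ∫⁻ t in {t : ℝ | 0 ≤ t ∧ |θ - t| < r}, ENNReal.ofReal (t ^ a)
        ≤ ∫⁻ t in Ioo (θ - r) (θ + r), ENNReal.ofReal (t ^ a) := by
          apply lintegral_mono_set
          rintro t ⟨_, ht⟩
          rw [abs_lt] at ht
          exact ⟨by linarith, by linarith⟩
      _ ≤ ∫⁻ t in Ioo (θ - r) (θ + r), ENNReal.ofReal (3 ^ |a| * (θ + r) ^ a) := by
          apply setLIntegral_mono' measurableSet_Ioo
          rintro t ⟨ht1, ht2⟩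
          exact ENNReal.ofReal_le_ofReal
            (rpow_le_of_comparable a (by norm_num) (by linarith) (by linarith) (by linarith))
      _ = ENNReal.ofReal (3 ^ |a| * (θ + r) ^ a * (2 * r)) := by
          rw [setLIntegral_const, Real.volume_Ioo, ← ENNReal.ofReal_mul (by positivity)]
          congr 2; ring
      _ ≤ _ := by
          apply ENNReal.ofReal_le_ofReal
          have : 0 < 3 / (a + 1) * r * (θ + r) ^ a := by positivity
          nlinarith
  · have hint : IntervalIntegrable (fun t : ℝ => t ^ a) volume 0 (θ + r) :=
      intervalIntegral.intervalIntegrable_rpow' ha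
    have hle : 0 ≤ θ + r := by linarith
    calc ∫⁻ t in {t : ℝ | 0 ≤ t ∧ |θ - t| < r}, ENNReal.ofReal (t ^ a)
        ≤ ∫⁻ t in Icc 0 (θ + r), ENNReal.ofReal (t ^ a) := by
          apply lintegral_mono_set
          rintro t ⟨h0, ht⟩
          rw [abs_lt] at ht
          exact ⟨h0, by linarith⟩
      _ = ∫⁻ t in Ioc 0 (θ + r), ENNReal.ofReal (t ^ a) := setLIntegral_congr Ioc_ae_eq_Icc.symm
      _ = ENNReal.ofReal (∫ t in Ioc 0 (θ + r), t ^ a) := by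
          rw [ofReal_integral_eq_lintegral_ofReal
            ((intervalIntegrable_iff_integrableOn_Ioc_of_le hle).1 hint)]
          filter_upwards [ae_restrict_mem measurableSet_Ioc] with t ht
          exact Real.rpow_nonneg ht.1.le _
      _ = ENNReal.ofReal ((θ + r) ^ a * (θ + r) / (a + 1)) := by
          rw [← intervalIntegral.integral_of_le hle, integral_rpow (Or.inl ha),
            Real.zero_rpow ha1.ne', Real.rpow_add_one (by linarith), sub_zero]
      _ ≤ _ := by
          apply ENNReal.ofReal_le_ofReal
          have h4 : (θ + r) ^ a * (θ + r) / (a + 1) ≤ (θ + r) ^ a * (3 * r) / (a + 1) := by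
            gcongr; linarith
          have h5 : (θ + r) ^ a * (3 * r) / (a + 1) = 3 / (a + 1) * r * (θ + r) ^ a := by ring
          have : 0 < 2 * 3 ^ |a| * r * (θ + r) ^ a := by positivity
          nlinarith

/-- `power_ball_le` with exponent `2p`, in terms of the scale `1 - cos θ + r²`. -/
lemma power_ball_le_scale {p : ℝ} (hp : -(1 / 2) < p) : ∃ K : ℝ, 0 < K ∧ ∀ θ r : ℝ,
    0 ≤ θ → θ ≤ Real.pi → 0 < r →
    ∫⁻ t in {t : ℝ | 0 ≤ t ∧ |θ - t| < r}, ENNReal.ofReal (t ^ (2 * p)) ≤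
      ENNReal.ofReal (K * r * (1 - Real.cos θ + r ^ 2) ^ p) := by
  obtain ⟨K, hK, h⟩ := power_ball_le (a := 2 * p) (by linarith)
  refine ⟨K * 16 ^ |p|, by positivity, fun θ r h0 h1 hr => (h θ r h0 hr).trans ?_⟩
  obtain ⟨s1, s2⟩ := scale_comparable h0 h1 hr
  have hP : 0 < 1 - Real.cos θ + r ^ 2 := by
    have := Real.cos_le_one θ
    nlinarith [sq_pos_of_pos hr]
  apply ENNReal.ofReal_le_ofReal
  have h2 : (θ + r) ^ (2 * p) ≤ 16 ^ |p| * (1 - Real.cos θ + r ^ 2) ^ p := by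
    rw [Real.rpow_mul (by linarith), Real.rpow_two]
    exact rpow_le_of_comparable p (by norm_num) hP (by nlinarith) s1
  calc K * r * (θ + r) ^ (2 * p) ≤ K * r * (16 ^ |p| * (1 - Real.cos θ + r ^ 2) ^ p) := by gcongr
    _ = _ := by ring

/-- On the half `t ≤ π/2` of a ball, the factor `1 + cos t` is comparable to its scale
`1 + cos θ + r²` at the centre, since both are bounded above and below; the factor `1 - cos t`
is comparable to `t²`. -/
lemma half_density_le (p q : ℝ) {θ r t : ℝ} (h0 : 0 ≤ θ) (h1 : θ ≤ Real.pi)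
    (hr : 0 < r) (hrπ : r ≤ Real.pi) (ht : |θ - t| < r) (ht0 : 0 < t) (ht1 : t ≤ Real.pi / 2) :
    (1 - Real.cos t) ^ p * (1 + Real.cos t) ^ q ≤
      16 ^ |p| * 1024 ^ |q| * (1 + Real.cos θ + r ^ 2) ^ q * t ^ (2 * p) := by
  have hpi := Real.pi_pos
  rw [abs_lt] at ht
  have hS : (1 - Real.cos t) ^ p ≤ 16 ^ |p| * t ^ (2 * p) := by
    rw [Real.rpow_mul ht0.le, Real.rpow_two]
    have := sq_le_one_sub_cos ht0.le (by linarith)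
    have := one_sub_cos_le_sq t
    exact rpow_le_of_comparable p (by norm_num) (by positivity) (by nlinarith) (by nlinarith)
  have hT : (1 + Real.cos t) ^ q ≤ 1024 ^ |q| * (1 + Real.cos θ + r ^ 2) ^ q := by
    have a1 := sq_le_one_sub_cos (t := Real.pi - t) (by linarith) (by linarith)
    have a2 := one_sub_cos_le_sq (Real.pi - t)
    obtain ⟨s1, s2⟩ := scale_comparable (θ := Real.pi - θ) (r := r) (by linarith)
      (by linarith) hr
    rw [Real.cos_pi_sub, sub_neg_eq_add] at *
    have b1 : (Real.pi / 2) ^ 2 ≤ (Real.pi - t) ^ 2 := by gcongr; linarith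
    have b2 : (Real.pi - t) ^ 2 ≤ Real.pi ^ 2 := by gcongr <;> linarith
    have b3 : (Real.pi / 2) ^ 2 ≤ (Real.pi - θ + r) ^ 2 := by gcongr; linarith
    have b4 : (Real.pi - θ + r) ^ 2 ≤ (2 * Real.pi) ^ 2 := by gcongr <;> linarith
    exact rpow_le_of_comparable q (by norm_num) (by nlinarith) (by nlinarith) (by nlinarith)
  have := mul_le_mul hS hT (Real.rpow_nonneg (by linarith [Real.neg_one_le_cos t]) _)
    (mul_nonneg (by positivity) (by positivity))
  refine this.trans_eq (by ring)

lemma upper_bound (α β : ℝ) (hα : -1 < α) (hβ : -1 < β) : ∃ C : ℝ, 0 < C ∧ ∀ θ r : ℝ,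
    0 ≤ θ → θ ≤ Real.pi → 0 < r → r ≤ Real.pi →
    ∫⁻ t in {t | t ∈ Icc 0 Real.pi ∧ |θ - t| < r}, angDensity α β t ≤
      ENNReal.ofReal (C * r * (1 - Real.cos θ + r ^ 2) ^ (α + 1 / 2) *
        (1 + Real.cos θ + r ^ 2) ^ (β + 1 / 2)) := by
  obtain ⟨K, hK, hKb⟩ := power_ball_le_scale (p := α + 1 / 2) (by linarith)
  obtain ⟨L, hL, hLb⟩ := power_ball_le_scale (p := β + 1 / 2) (by linarith)
  obtain ⟨p, hp⟩ : ∃ p, p = α + 1 / 2 := ⟨_, rfl⟩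
  obtain ⟨q, hq⟩ : ∃ q, q = β + 1 / 2 := ⟨_, rfl⟩
  rw [← hp] at hKb
  rw [← hq] at hLb
  refine ⟨16 ^ |p| * 1024 ^ |q| * K + 16 ^ |q| * 1024 ^ |p| * L, by positivity,
    fun θ r h0 h1 hr hrπ => ?_⟩
  rw [← hp, ← hq]
  have hP : 0 < 1 - Real.cos θ + r ^ 2 := by
    nlinarith [sq_pos_of_pos hr, Real.cos_le_one θ]
  have hQ : 0 < 1 + Real.cos θ + r ^ 2 := by
    nlinarith [sq_pos_of_pos hr, Real.neg_one_le_cos θ]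
  have hKb := hKb θ r h0 h1 hr
  have hLb := hLb (Real.pi - θ) r (by linarith) (by linarith) hr
  rw [Real.cos_pi_sub, sub_neg_eq_add] at hLb
  -- The reflection `t ↦ π - t` turns the singularity at `π` into one at `0`.
  have hrefl : ∫⁻ t in {t : ℝ | t ≤ Real.pi ∧ |θ - t| < r},
      ENNReal.ofReal ((Real.pi - t) ^ (2 * q)) =
      ∫⁻ t in {t : ℝ | 0 ≤ t ∧ |Real.pi - θ - t| < r}, ENNReal.ofReal (t ^ (2 * q)) := by
    have hm : MeasurableSet {t : ℝ | 0 ≤ t ∧ |Real.pi - θ - t| < r} :=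
      measurableSet_Ici.inter (measurableSet_lt (by fun_prop) measurable_const :
        MeasurableSet {t : ℝ | |Real.pi - θ - t| < r})
    rw [← (Measure.measurePreserving_sub_left volume Real.pi).setLIntegral_comp_preimage hm
      (by fun_prop)]
    congr 2
    ext t
    simp only [mem_ofPred_eq, mem_preimage, sub_nonneg]
    rw [show Real.pi - θ - (Real.pi - t) = -(θ - t) by ring, abs_neg]
  rw [← hrefl] at hLb
  obtain ⟨P, hPdef⟩ : ∃ P, P = (1 - Real.cos θ + r ^ 2) ^ p := ⟨_, rfl⟩
  obtain ⟨Q, hQdef⟩ : ∃ Q, Q = (1 + Real.cos θ + r ^ 2) ^ q := ⟨_, rfl⟩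
  have hP0 : 0 < P := hPdef ▸ Real.rpow_pos_of_pos hP _
  have hQ0 : 0 < Q := hQdef ▸ Real.rpow_pos_of_pos hQ _
  rw [← hPdef, ← hQdef]
  rw [← hPdef] at hKb
  rw [← hQdef] at hLb
  have hpt : ∀ t ∈ {t | t ∈ Icc 0 Real.pi ∧ |θ - t| < r}, angDensity α β t ≤
      ENNReal.ofReal (16 ^ |p| * 1024 ^ |q| * Q) * ENNReal.ofReal (t ^ (2 * p)) +
      ENNReal.ofReal (16 ^ |q| * 1024 ^ |p| * P) *
        ENNReal.ofReal ((Real.pi - t) ^ (2 * q)) := by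
    rintro t ⟨⟨ht0, ht1⟩, ht⟩
    rcases ht0.eq_or_lt with rfl | ht0
    · simp [angDensity]
    rcases ht1.eq_or_lt with rfl | ht1
    · simp [angDensity]
    rw [angDensity_eq α β ht0 ht1, ← hp, ← hq]
    rcases le_total t (Real.pi / 2) with h | h
    · refine le_add_right ?_
      rw [← ENNReal.ofReal_mul (by positivity), hQdef]
      exact ENNReal.ofReal_le_ofReal (half_density_le p q h0 h1 hr hrπ ht ht0 h)
    · refine le_add_left ?_
      rw [← ENNReal.ofReal_mul (by positivity), hPdef]
      have := half_density_le q p (θ := Real.pi - θ) (t := Real.pi - t) (by linarith)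
        (by linarith) hr hrπ
        (by rwa [show Real.pi - θ - (Real.pi - t) = -(θ - t) by ring, abs_neg])
        (by linarith) (by linarith)
      simp only [Real.cos_pi_sub, sub_neg_eq_add, ← sub_eq_add_neg] at this
      rw [mul_comm ((1 - Real.cos t) ^ p)]
      exact ENNReal.ofReal_le_ofReal this
  calc ∫⁻ t in {t | t ∈ Icc 0 Real.pi ∧ |θ - t| < r}, angDensity α β t
      ≤ _ := setLIntegral_mono' (measurableSet_angBall θ r) hpt
    _ = ENNReal.ofReal (16 ^ |p| * 1024 ^ |q| * Q) *
          (∫⁻ t in {t | t ∈ Icc 0 Real.pi ∧ |θ - t| < r}, ENNReal.ofReal (t ^ (2 * p))) +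
        ENNReal.ofReal (16 ^ |q| * 1024 ^ |p| * P) *
          ∫⁻ t in {t | t ∈ Icc 0 Real.pi ∧ |θ - t| < r},
            ENNReal.ofReal ((Real.pi - t) ^ (2 * q)) := by
        rw [lintegral_add_left (by fun_prop), lintegral_const_mul _ (by fun_prop),
          lintegral_const_mul _ (by fun_prop)]
    _ ≤ ENNReal.ofReal (16 ^ |p| * 1024 ^ |q| * Q) * ENNReal.ofReal (K * r * P) +
        ENNReal.ofReal (16 ^ |q| * 1024 ^ |p| * P) * ENNReal.ofReal (L * r * Q) := by
        gcongr
        · refine le_trans (lintegral_mono_set ?_) hKb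
          exact fun t ht => ⟨ht.1.1, ht.2⟩
        · refine le_trans (lintegral_mono_set ?_) hLb
          exact fun t ht => ⟨ht.1.2, ht.2⟩
    _ = _ := by
        rw [← ENNReal.ofReal_mul (by positivity), ← ENNReal.ofReal_mul (by positivity),
          ← ENNReal.ofReal_add (by positivity) (by positivity)]
        congr 1; ring

/-! ### Lower bound -/

/-- Where `t` is comparable to `θ + r` and `π - t` to `π - θ + r`, the density at `t` is at least
a constant multiple of its scale at the centre. -/
lemma scale_le_density (p q : ℝ) {θ r t : ℝ} (h0 : 0 ≤ θ) (h1 : θ ≤ Real.pi) (hr : 0 < r)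
    (ht0 : 0 < t) (ht1 : t < Real.pi) (ha : θ + r ≤ 8 * t) (hb : t ≤ θ + r)
    (hc : Real.pi - θ + r ≤ 8 * (Real.pi - t)) (hd : Real.pi - t ≤ Real.pi - θ + r) :
    (1 - Real.cos θ + r ^ 2) ^ p * (1 + Real.cos θ + r ^ 2) ^ q ≤
      1024 ^ |p| * 1024 ^ |q| * ((1 - Real.cos t) ^ p * (1 + Real.cos t) ^ q) := by
  -- One endpoint at a time; the other one follows by reflection.
  have key : ∀ (p : ℝ) {θ t : ℝ}, 0 ≤ θ → θ ≤ Real.pi → 0 < t → t < Real.pi → θ + r ≤ 8 * t →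
      t ≤ θ + r → (1 - Real.cos θ + r ^ 2) ^ p ≤ 1024 ^ |p| * (1 - Real.cos t) ^ p := by
    intro p θ t h0 h1 ht0 ht1 ha hb
    have a1 := sq_le_one_sub_cos ht0.le ht1.le
    have a2 := one_sub_cos_le_sq t
    obtain ⟨s1, s2⟩ := scale_comparable h0 h1 hr
    have b1 : (θ + r) ^ 2 ≤ (8 * t) ^ 2 := by gcongr
    have b2 : t ^ 2 ≤ (θ + r) ^ 2 := by gcongr
    have b3 : 0 < t ^ 2 := by positivity
    exact rpow_le_of_comparable p (by norm_num) (by nlinarith) (by nlinarith) (by nlinarith)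
  have k1 := key p h0 h1 ht0 ht1 ha hb
  have k2 := key q (θ := Real.pi - θ) (t := Real.pi - t) (by linarith) (by linarith)
    (by linarith) (by linarith) hc hd
  simp only [Real.cos_pi_sub, sub_neg_eq_add] at k2
  have hQ : 0 ≤ 1 + Real.cos θ + r ^ 2 := by
    nlinarith [sq_pos_of_pos hr, Real.neg_one_le_cos θ]
  have := mul_le_mul k1 k2 (Real.rpow_nonneg hQ _)
    (mul_nonneg (by positivity) (Real.rpow_nonneg (by linarith [Real.cos_le_one t]) _))
  exact this.trans_eq (by ring)

lemma lower_bound (α β : ℝ) : ∃ c : ℝ, 0 < c ∧ ∀ θ r : ℝ,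
    0 ≤ θ → θ ≤ Real.pi → 0 < r → r ≤ Real.pi →
    ENNReal.ofReal (c * r * (1 - Real.cos θ + r ^ 2) ^ (α + 1 / 2) *
        (1 + Real.cos θ + r ^ 2) ^ (β + 1 / 2)) ≤
      ∫⁻ t in {t | t ∈ Icc 0 Real.pi ∧ |θ - t| < r}, angDensity α β t := by
  obtain ⟨p, hp⟩ : ∃ p, p = α + 1 / 2 := ⟨_, rfl⟩
  obtain ⟨q, hq⟩ : ∃ q, q = β + 1 / 2 := ⟨_, rfl⟩
  have hB : (0 : ℝ) < 1024 ^ |p| * 1024 ^ |q| := by positivity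
  refine ⟨(1024 ^ |p| * 1024 ^ |q|)⁻¹ / 8, by positivity, fun θ r h0 h1 hr hrπ => ?_⟩
  rw [← hp, ← hq]
  have hP : 0 < 1 - Real.cos θ + r ^ 2 := by
    nlinarith [sq_pos_of_pos hr, Real.cos_le_one θ]
  have hQ : 0 < 1 + Real.cos θ + r ^ 2 := by
    nlinarith [sq_pos_of_pos hr, Real.neg_one_le_cos θ]
  -- An interval of length `r / 8` inside the ball, on the side of `θ` facing the far endpoint.
  obtain ⟨u, hu⟩ : ∃ u : ℝ, ∀ t ∈ Icc u (u + r / 8), 0 < t ∧ t < Real.pi ∧ |θ - t| < r ∧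
      θ + r ≤ 8 * t ∧ t ≤ θ + r ∧ Real.pi - θ + r ≤ 8 * (Real.pi - t) ∧
      Real.pi - t ≤ Real.pi - θ + r := by
    rcases le_total θ (Real.pi / 2) with h | h
    · refine ⟨θ + r / 8, fun t ht => ?_⟩
      obtain ⟨ht1, ht2⟩ := ht
      refine ⟨?_, ?_, abs_lt.2 ⟨?_, ?_⟩, ?_, ?_, ?_, ?_⟩ <;> linarith
    · refine ⟨θ - r / 4, fun t ht => ?_⟩
      obtain ⟨ht1, ht2⟩ := ht
      refine ⟨?_, ?_, abs_lt.2 ⟨?_, ?_⟩, ?_, ?_, ?_, ?_⟩ <;> linarith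
  have hX := mul_pos (Real.rpow_pos_of_pos hP p) (Real.rpow_pos_of_pos hQ q)
  calc ENNReal.ofReal ((1024 ^ |p| * 1024 ^ |q|)⁻¹ / 8 * r * (1 - Real.cos θ + r ^ 2) ^ p *
        (1 + Real.cos θ + r ^ 2) ^ q)
      = ∫⁻ t in Icc u (u + r / 8), ENNReal.ofReal ((1024 ^ |p| * 1024 ^ |q|)⁻¹ *
          ((1 - Real.cos θ + r ^ 2) ^ p * (1 + Real.cos θ + r ^ 2) ^ q)) := by
        rw [setLIntegral_const, Real.volume_Icc, ← ENNReal.ofReal_mul (by positivity)]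
        congr 1; ring
    _ ≤ ∫⁻ t in Icc u (u + r / 8), angDensity α β t := by
        apply setLIntegral_mono' measurableSet_Icc
        intro t ht
        obtain ⟨k1, k2, -, k3, k4, k5, k6⟩ := hu t ht
        rw [angDensity_eq α β k1 k2, ← hp, ← hq]
        apply ENNReal.ofReal_le_ofReal
        rw [inv_mul_le_iff₀ hB]
        exact scale_le_density p q h0 h1 hr k1 k2 k3 k4 k5 k6
    _ ≤ _ := by
        apply lintegral_mono_set
        exact fun t ht => ⟨⟨(hu t ht).1.le, (hu t ht).2.1.le⟩, (hu t ht).2.2.1⟩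

/-! ### The measure of a ball -/

/-- On `M = [-1,1]` with `α, β > -1`, the Jacobi measure
`dμ = (1-x)^α (1+x)^β dx` and the distance `ρ(x,y) = |arccos x - arccos y|`, there is
a constant `c > 1` depending only on `α, β` with
`c⁻¹ r (1-x+r²)^{α+1/2} (1+x+r²)^{β+1/2} ≤ μ(B(x,r)) ≤ c r (1-x+r²)^{α+1/2} (1+x+r²)^{β+1/2}`
for all `x ∈ [-1,1]` and `0 < r ≤ π`. -/
theorem jacobi_ball_measure (α β : ℝ) (hα : -1 < α) (hβ : -1 < β) :
    ∃ c : ℝ, 1 < c ∧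
      ∀ x ∈ Icc (-1 : ℝ) 1, ∀ r : ℝ, 0 < r → r ≤ Real.pi →
        ENNReal.ofReal (c⁻¹ * r * (1 - x + r ^ 2) ^ (α + 1 / 2) *
            (1 + x + r ^ 2) ^ (β + 1 / 2)) ≤
            jacobiMeasure α β {y ∈ Icc (-1 : ℝ) 1 | |Real.arccos x - Real.arccos y| < r} ∧
          jacobiMeasure α β {y ∈ Icc (-1 : ℝ) 1 | |Real.arccos x - Real.arccos y| < r} ≤
            ENNReal.ofReal (c * r * (1 - x + r ^ 2) ^ (α + 1 / 2) *
              (1 + x + r ^ 2) ^ (β + 1 / 2)) := by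
  obtain ⟨C, hC, hU⟩ := upper_bound α β hα hβ
  obtain ⟨c, hc, hL⟩ := lower_bound α β
  have hc' : 0 < c⁻¹ := inv_pos.2 hc
  have hle : (1 + C + c⁻¹)⁻¹ ≤ c := inv_le_of_inv_le₀ hc (by linarith)
  refine ⟨1 + C + c⁻¹, by linarith, fun x hx r hr hrπ => ?_⟩
  have h1 := hU (Real.arccos x) r (Real.arccos_nonneg x) (Real.arccos_le_pi x) hr hrπ
  have h2 := hL (Real.arccos x) r (Real.arccos_nonneg x) (Real.arccos_le_pi x) hr hrπ
  rw [Real.cos_arccos hx.1 hx.2] at h1 h2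
  have hP : 0 ≤ (1 - x + r ^ 2) ^ (α + 1 / 2) :=
    Real.rpow_nonneg (by nlinarith [hx.2, sq_nonneg r]) _
  have hQ : 0 ≤ (1 + x + r ^ 2) ^ (β + 1 / 2) :=
    Real.rpow_nonneg (by nlinarith [hx.1, sq_nonneg r]) _
  rw [jacobiMeasure_ball]
  refine ⟨le_trans (ENNReal.ofReal_le_ofReal ?_) h2, h1.trans (ENNReal.ofReal_le_ofReal ?_)⟩
  · gcongr
  · gcongr
    linarith
end
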